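/- arXiv:1705.09195 — 2 statements merged into one kernel-verified Lean document; each statement's English description precedes it below -/
import Mathlib

section
/- Let X ⊆ P² be a k-configuration of type (1,2,…,s) with s ≥ 2, defined using subsets X₁,…,X_s and lines L₁,…,L_s, where X₁ = {P} is the point on L₁ and X₂ = {Q₁,Q₂} are the two points on L₂. If L is a line in P² with |L ∩ X| = s and L ∉ {L₁,…,L_s}, then L is either the line through P and Q₁ or the line through P and Q₂. -/
/-- The projective plane over a field `K`, as the projectivization of `K³`. -/
abbrev P2 (K : Type) [Field K] := Projectivization K (Fin 3 → K)

/-- A line in `P2 K`: a 2-dimensional linear subspace of `K³`. -/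
structure ProjLine (K : Type) [Field K] where
  toSubmodule : Submodule K (Fin 3 → K)
  finrank_eq_two : Module.finrank K toSubmodule = 2

/-- The set of points of `P2 K` lying on a line. -/
def ProjLine.points {K : Type} [Field K] (L : ProjLine K) : Set (P2 K) :=
  {p | p.submodule ≤ L.toSubmodule}

/-- The homogeneous prime ideal of a point of `P2 K`: the ideal generated by
the linear forms vanishing at the point. -/
noncomputable def pointIdeal {K : Type} [Field K] (p : P2 K) :
    Ideal (MvPolynomial (Fin 3) K) :=
  Ideal.span {f | f.IsHomogeneous 1 ∧ MvPolynomial.eval p.rep f = 0}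

/-- The defining ideal `I_{mX} = ⋂_{P ∈ X} I_P^m` of the fat point scheme `mX`. -/
noncomputable def fatIdeal {K : Type} [Field K] (X : Set (P2 K)) (m : ℕ) :
    Ideal (MvPolynomial (Fin 3) K) :=
  ⨅ p ∈ X, (pointIdeal p) ^ m

/-- The Hilbert function of `R/I`: `H(t) = dim_K R_t - dim_K I_t`. -/
noncomputable def hilb {K : Type} [Field K] (I : Ideal (MvPolynomial (Fin 3) K)) (t : ℕ) : ℕ :=
  Module.finrank K ↥(MvPolynomial.homogeneousSubmodule (Fin 3) K t) -
    Module.finrank K ↥(Submodule.restrictScalars K (I : Submodule (MvPolynomial (Fin 3) K) (MvPolynomial (Fin 3) K)) ⊓ MvPolynomial.homogeneousSubmodule (Fin 3) K t)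

/-- The Hilbert function extended to `ℤ`, with `H(t) = 0` for `t < 0`. -/
noncomputable def hilbZ {K : Type} [Field K] (I : Ideal (MvPolynomial (Fin 3) K)) (t : ℤ) : ℤ :=
  if t < 0 then 0 else hilb I t.toNat

/-- The first difference `ΔH(t) = H(t) - H(t-1)` of the Hilbert function. -/
noncomputable def deltaHilb {K : Type} [Field K] (I : Ideal (MvPolynomial (Fin 3) K)) (t : ℤ) : ℤ :=
  hilbZ I t - hilbZ I (t - 1)

/-- `X` is a k-configuration of type `(d 0, …, d (s-1))` defined using the subsets
`Xs 0, …, Xs (s-1)` and the (distinct) lines `Ls 0, …, Ls (s-1)`. -/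
structure IsKConfig {K : Type} [Field K] {s : ℕ} (X : Set (P2 K)) (d : Fin s → ℕ)
    (Xs : Fin s → Set (P2 K)) (Ls : Fin s → ProjLine K) : Prop where
  one_le : ∀ i, 1 ≤ d i
  strictMono : StrictMono d
  lines_distinct : Function.Injective Ls
  union_eq : X = ⋃ i, Xs i
  card_eq : ∀ i, (Xs i).ncard = d i
  subset_line : ∀ i, Xs i ⊆ (Ls i).points
  not_mem : ∀ i j : Fin s, j < i → ∀ p ∈ Xs j, p ∉ (Ls i).points

/-!
Two distinct lines meet in at most one point, so `L` contains at most one point of each `X_i`.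
As `L` contains as many points of `X` as there are sets `X_i`, it meets every one of them, in
particular `X₁ = {P}` and `X₂ = {Q₁, Q₂}`.
-/

theorem finrank_submodule_sup_submodule_of_ne {K V : Type*} [DivisionRing K] [AddCommGroup V]
    [Module K V] {p q : Projectivization K V} (hpq : p ≠ q) :
    Module.finrank K ↥(p.submodule ⊔ q.submodule) = 2 := by
  have hdisj : Disjoint p.submodule q.submodule :=
    (Submodule.isAtom_iff_finrank_eq_one.2 p.finrank_submodule).disjoint_of_ne
      (Submodule.isAtom_iff_finrank_eq_one.2 q.finrank_submodule)
      (Projectivization.submodule_injective.ne hpq)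
  have hdim := Submodule.finrank_sup_add_finrank_inf_eq p.submodule q.submodule
  rwa [hdisj.eq_bot, finrank_bot, p.finrank_submodule, q.finrank_submodule] at hdim

theorem nonempty_of_card_le_ncard_iUnion {ι α : Type*} [Finite ι] {t : ι → Set α}
    (ht : ∀ i, (t i).Subsingleton) (hcard : Nat.card ι ≤ (⋃ i, t i).ncard) (i : ι) :
    (t i).Nonempty := by
  have := Fintype.ofFinite ι
  contrapose! hcard with hempty
  have hle (j : ι) : (t j).ncard ≤ 1 :=
    have := (ht j).finite.to_subtype
    Set.ncard_le_one_iff_subsingleton.2 (ht j)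
  have hlt : (t i).ncard < 1 := by simp [hempty]
  calc (⋃ j, t j).ncard ≤ ∑ j, (t j).ncard := Set.ncard_iUnion_le_of_fintype t
    _ < ∑ _j : ι, 1 := Finset.sum_lt_sum (fun j _ ↦ hle j) ⟨i, Finset.mem_univ i, hlt⟩
    _ = Nat.card ι := by simp

namespace ProjLine

variable {K : Type} [Field K] {L M : ProjLine K}

theorem toSubmodule_injective :
    Function.Injective (toSubmodule : ProjLine K → Submodule K (Fin 3 → K)) := by
  rintro ⟨_, _⟩ ⟨_, _⟩ rfl
  rfl

theorem submodule_sup_submodule_eq_toSubmodule {p q : P2 K} (hpq : p ≠ q) (hp : p ∈ L.points)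
    (hq : q ∈ L.points) : p.submodule ⊔ q.submodule = L.toSubmodule :=
  Submodule.eq_of_le_of_finrank_eq (sup_le hp hq) <|
    (finrank_submodule_sup_submodule_of_ne hpq).trans L.finrank_eq_two.symm

theorem subsingleton_points_inter_points (hLM : L ≠ M) : (L.points ∩ M.points).Subsingleton := by
  rintro p ⟨hpL, hpM⟩ q ⟨hqL, hqM⟩
  by_contra hpq
  exact hLM <| toSubmodule_injective <|
    (submodule_sup_submodule_eq_toSubmodule hpq hpL hqL).symm.trans
      (submodule_sup_submodule_eq_toSubmodule hpq hpM hqM)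

end ProjLine

theorem kconfig_extra_line_general {K : Type} [Field K] {ι : Type*} [Finite ι]
    {Xs : ι → Set (P2 K)} {Ls : ι → ProjLine K} (hXs : ∀ i, Xs i ⊆ (Ls i).points)
    {L : ProjLine K} (hL : Nat.card ι ≤ ((⋃ i, Xs i) ∩ L.points).ncard)
    (hLnot : ∀ i, L ≠ Ls i) (i : ι) : (Xs i ∩ L.points).Nonempty := by
  refine nonempty_of_card_le_ncard_iUnion (t := fun j ↦ Xs j ∩ L.points) (fun j ↦ ?_) ?_ i
  · exact (ProjLine.subsingleton_points_inter_points (hLnot j).symm).anti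
      (Set.inter_subset_inter_left _ (hXs j))
  · rwa [← Set.iUnion_inter]

/-- **Lemma (extra line).** Let `X` be a k-configuration of type `(1,2,…,s)`,
`s ≥ 2`, with `X₁ = {P}` and `X₂ = {Q₁,Q₂}`. If a line `L` not among the
defining lines contains exactly `s` points of `X`, then `L` is the line through
`P` and `Q₁` or the line through `P` and `Q₂`. -/
theorem kconfig_extra_line {K : Type} [Field K] [IsAlgClosed K] {s : ℕ} (hs : 2 ≤ s)
    (X : Set (P2 K)) (Xs : Fin s → Set (P2 K)) (Ls : Fin s → ProjLine K)
    (hX : IsKConfig X (fun i : Fin s => i.1 + 1) Xs Ls)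
    (P Q₁ Q₂ : P2 K)
    (hX1 : Xs ⟨0, by omega⟩ = {P}) (hX2 : Xs ⟨1, by omega⟩ = {Q₁, Q₂}) (hQ : Q₁ ≠ Q₂)
    (L : ProjLine K) (hL : (X ∩ L.points).ncard = s) (hLnot : ∀ i : Fin s, L ≠ Ls i) :
    (P ∈ L.points ∧ Q₁ ∈ L.points) ∨ (P ∈ L.points ∧ Q₂ ∈ L.points) := by
  have hmeet := kconfig_extra_line_general hX.subset_line (by simp [← hX.union_eq, hL]) hLnot
  simpa [hX1, hX2, Set.inter_nonempty, and_or_left] using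
    And.intro (hmeet ⟨0, by omega⟩) (hmeet ⟨1, by omega⟩)
end

section
/- Let X ⊆ P² be a k-configuration of type (1,2,…,s) with s ≥ 2. Then there are at most s + 1 lines L in P² with |L ∩ X| = s. -/
/-!
A `k`-configuration of type `(1, …, s)` has at most `s (s + 1) / 2` points. Suppose `s + 2` lines
each contain `s` of them, and let `m p` be the number of these lines through the point `p`. Since
`(m p - 2) (m p - 3) ≥ 0`, summing over the points gives `4 ∑ m p ≤ ∑ m p (m p - 1) + 6 |X|`.
Here `∑ m p ≥ s (s + 2)`, while `∑ m p (m p - 1) ≤ (s + 2) (s + 1)` because two distinct lines meet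
in at most one point. These inequalities force `s ≤ 1`.
-/

section Incidence

open Finset

variable {ι α : Type*}

theorem two_mul_mul_le_mul_pred_add (k m : ℕ) : 2 * k * m ≤ m * (m - 1) + k * (k + 1) := by
  cases m with
  | zero => simp
  | succ m =>
    rw [Nat.add_sub_cancel]
    obtain hkm | hmk := le_or_gt k m
    · obtain ⟨d, rfl⟩ := Nat.exists_eq_add_of_le hkm
      nlinarith
    · obtain ⟨d, rfl⟩ := Nat.exists_eq_add_of_lt hmk
      nlinarith

variable (r : ι → α → Prop) [∀ i p, Decidable (r i p)]

theorem sum_degree_mul_pred_le {T : Finset ι} {X : Finset α}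
    (h : (T : Set ι).Pairwise fun i j ↦ #{p ∈ X | r i p ∧ r j p} ≤ 1) :
    ∑ p ∈ X, #{i ∈ T | r i p} * (#{i ∈ T | r i p} - 1) ≤ #T * (#T - 1) := by
  classical
  have card_offDiag (U : Finset ι) : #U.offDiag = #U * (#U - 1) := by
    rw [offDiag_card, Nat.mul_sub_one]
  have offDiag_filter (p : α) :
      ({i ∈ T | r i p} : Finset ι).offDiag = {ij ∈ T.offDiag | r ij.1 p ∧ r ij.2 p} := by
    ext ⟨i, j⟩
    simp only [mem_offDiag, mem_filter]
    tauto
  calc ∑ p ∈ X, #{i ∈ T | r i p} * (#{i ∈ T | r i p} - 1)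
      = ∑ p ∈ X, #{ij ∈ T.offDiag | r ij.1 p ∧ r ij.2 p} := by
        simp only [← card_offDiag, offDiag_filter]
    _ = ∑ ij ∈ T.offDiag, #{p ∈ X | r ij.1 p ∧ r ij.2 p} :=
        sum_card_bipartiteAbove_eq_sum_card_bipartiteBelow fun p (ij : ι × ι) ↦ r ij.1 p ∧ r ij.2 p
    _ ≤ #T.offDiag • 1 := sum_le_card_nsmul _ _ _ fun ij hij ↦
        have ⟨hi, hj, hne⟩ := mem_offDiag.1 hij
        h hi hj hne
    _ = #T * (#T - 1) := by rw [smul_eq_mul, mul_one, card_offDiag]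

theorem two_mul_mul_sum_card_le (k : ℕ) {T : Finset ι} {X : Finset α}
    (h : (T : Set ι).Pairwise fun i j ↦ #{p ∈ X | r i p ∧ r j p} ≤ 1) :
    2 * k * ∑ i ∈ T, #{p ∈ X | r i p} ≤ #T * (#T - 1) + k * (k + 1) * #X :=
  calc 2 * k * ∑ i ∈ T, #{p ∈ X | r i p}
      = ∑ p ∈ X, 2 * k * #{i ∈ T | r i p} := by
        rw [← mul_sum]
        exact congrArg _ (sum_card_bipartiteAbove_eq_sum_card_bipartiteBelow r)
    _ ≤ ∑ p ∈ X, (#{i ∈ T | r i p} * (#{i ∈ T | r i p} - 1) + k * (k + 1)) :=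
        sum_le_sum fun p _ ↦ two_mul_mul_le_mul_pred_add k _
    _ = ∑ p ∈ X, #{i ∈ T | r i p} * (#{i ∈ T | r i p} - 1) + k * (k + 1) * #X := by
        rw [sum_add_distrib, sum_const, smul_eq_mul, mul_comm #X]
    _ ≤ #T * (#T - 1) + k * (k + 1) * #X := by
        gcongr
        exact sum_degree_mul_pred_le r h

theorem encard_le_of_pairwise_subsingleton_inter {s : ℕ} (hs : 2 ≤ s) {X : Set α} (hX : X.Finite)
    (hcard : 2 * X.ncard ≤ s * (s + 1)) {A : ι → Set α} {T : Set ι}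
    (hinter : T.Pairwise fun i j ↦ (A i ∩ A j).Subsingleton)
    (hT : ∀ i ∈ T, s ≤ (X ∩ A i).ncard) : T.encard ≤ (s + 1 : ℕ) := by
  classical
  by_contra! hlt
  obtain ⟨U, hUT, hU⟩ := Set.exists_subset_encard_eq
    (show ((s + 2 : ℕ) : ℕ∞) ≤ T.encard from Order.add_one_le_of_lt hlt)
  lift U to Finset ι using Set.finite_of_encard_eq_coe hU
  lift X to Finset α using hX
  rw [Set.encard_coe_eq_coe_finsetCard, Nat.cast_inj] at hU
  rw [Set.ncard_coe_finset] at hcard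
  have upper : 4 * ∑ i ∈ U, #{p ∈ X | p ∈ A i} ≤ (s + 2) * (s + 1) + 6 * #X := by
    simpa [hU] using two_mul_mul_sum_card_le (fun i p ↦ p ∈ A i) 2 <|
      (hinter.mono hUT).imp fun i j hij ↦ card_le_one.2 fun p hp q hq ↦
        hij (mem_filter.1 hp).2 (mem_filter.1 hq).2
  have lower : (s + 2) * s ≤ ∑ i ∈ U, #{p ∈ X | p ∈ A i} := by
    rw [← hU, ← smul_eq_mul]
    refine card_nsmul_le_sum _ _ _ fun i hi ↦ ?_
    rw [← Set.ncard_coe_finset, coe_filter]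
    exact hT i (hUT hi)
  nlinarith

end Incidence

namespace ProjLine

variable {K : Type} [Field K]

theorem toSubmodule_injective_s6 : Function.Injective (toSubmodule (K := K)) := by
  rintro ⟨_, _⟩ ⟨_, _⟩ rfl
  rfl

theorem finrank_inf_le_one {L M : ProjLine K} (h : L ≠ M) :
    Module.finrank K ↥(L.toSubmodule ⊓ M.toSubmodule) ≤ 1 := by
  have not_le : ¬ L.toSubmodule ≤ M.toSubmodule := fun hle ↦
    h <| toSubmodule_injective_s6 <| Submodule.eq_of_le_of_finrank_eq hle <|
      L.finrank_eq_two.trans M.finrank_eq_two.symm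
  have hlt := Submodule.finrank_lt_finrank_of_lt (inf_lt_left.2 not_le)
  rw [L.finrank_eq_two] at hlt
  exact Nat.le_of_lt_succ hlt

theorem points_inter_subsingleton {L M : ProjLine K} (h : L ≠ M) :
    (L.points ∩ M.points).Subsingleton := by
  have submodule_eq {p : P2 K} (hp : p ∈ L.points ∩ M.points) :
      p.submodule = L.toSubmodule ⊓ M.toSubmodule :=
    Submodule.eq_of_le_of_finrank_le (le_inf hp.1 hp.2) <| by
      rw [Projectivization.finrank_submodule]
      exact finrank_inf_le_one h
  exact fun p hp q hq ↦
    Projectivization.submodule_injective ((submodule_eq hp).trans (submodule_eq hq).symm)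

end ProjLine

namespace IsKConfig

variable {K : Type} [Field K] {s : ℕ} {X : Set (P2 K)} {d : Fin s → ℕ}
  {Xs : Fin s → Set (P2 K)} {Ls : Fin s → ProjLine K}

theorem finite (hX : IsKConfig X d Xs Ls) : X.Finite := by
  rw [hX.union_eq]
  exact Set.finite_iUnion fun i ↦ Set.finite_of_ncard_pos <| by
    rw [hX.card_eq]
    exact hX.one_le i

theorem ncard_le_sum (hX : IsKConfig X d Xs Ls) : X.ncard ≤ ∑ i, d i := by
  simpa only [← hX.union_eq, hX.card_eq] using Set.ncard_iUnion_le_of_fintype Xs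

theorem two_mul_ncard_le (hX : IsKConfig X (fun i : Fin s ↦ i.1 + 1) Xs Ls) :
    2 * X.ncard ≤ s * (s + 1) :=
  calc 2 * X.ncard ≤ 2 * ∑ i : Fin s, (i.1 + 1) := by gcongr; exact hX.ncard_le_sum
    _ = (∑ i ∈ Finset.range (s + 1), i) * 2 := by
      rw [Fin.sum_univ_eq_sum_range (· + 1), Finset.sum_range_succ', add_zero, mul_comm]
    _ = s * (s + 1) := by rw [Finset.sum_range_id_mul_two, Nat.add_sub_cancel, mul_comm]

end IsKConfig

theorem kconfig_at_most_lines_general {K : Type} [Field K] {s : ℕ} (hs : 2 ≤ s) {X : Set (P2 K)}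
    (hX : X.Finite) (hcard : 2 * X.ncard ≤ s * (s + 1)) :
    {L : ProjLine K | s ≤ (X ∩ L.points).ncard}.encard ≤ (s + 1 : ℕ) :=
  encard_le_of_pairwise_subsingleton_inter hs hX hcard
    (fun _ _ _ _ hne ↦ ProjLine.points_inter_subsingleton hne) fun _ hL ↦ hL

/-- **Corollary (number of lines).** Let `X` be a k-configuration of type
`(1,2,…,s)`, `s ≥ 2`. Then there are at most `s + 1` lines containing exactly
`s` points of `X`. -/
theorem kconfig_at_most_lines {K : Type} [Field K] [IsAlgClosed K] {s : ℕ} (hs : 2 ≤ s)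
    (X : Set (P2 K)) (Xs : Fin s → Set (P2 K)) (Ls : Fin s → ProjLine K)
    (hX : IsKConfig X (fun i : Fin s => i.1 + 1) Xs Ls) :
    {L : ProjLine K | (X ∩ L.points).ncard = s}.Finite ∧
      {L : ProjLine K | (X ∩ L.points).ncard = s}.ncard ≤ s + 1 :=
  Set.encard_le_coe_iff_finite_ncard_le.1 <|
    (Set.encard_le_encard fun _ hL ↦ hL.ge).trans
      (kconfig_at_most_lines_general hs hX.finite hX.two_mul_ncard_le)
end
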